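/- arXiv:2008.11765 — 2 statements merged into one kernel-verified Lean document; each statement's English description precedes it below -/
import Mathlib

section
/- Let k > 0 and μ ∈ (0,1). The PGN(μ,k) distribution is absolutely continuous with respect to Lebesgue measure on ℝ, with density f_X given by f_X(x) = ((x²)^{(k−1)/2} / (Γ(k/2) · 2^{k/2−1})) · ∫_{1/2}^{1} (cos²(πu))^{−k/2} · exp(−x²/(2cos²(πu))) · f_U(u) du for x < 0, and f_X(x) = ((x²)^{(k−1)/2} / (Γ(k/2) · 2^{k/2−1})) · ∫_{0}^{1/2} (cos²(πu))^{−k/2} · exp(−x²/(2cos²(πu))) · f_U(u) du for x ≥ 0. That is, PGN(μ,k) equals the measure with density f_X with respect to Lebesgue measure. -/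
open MeasureTheory Real Set

/-- Density of the chi-squared distribution with `k` degrees of freedom. -/
noncomputable def chiSqDensity (k : ℝ) (v : ℝ) : ℝ :=
  if 0 < v then v ^ (k / 2 - 1) * Real.exp (-v / 2) / ((2 : ℝ) ^ (k / 2) * Real.Gamma (k / 2))
  else 0

/-- The Beta function `B(a,b) = Γ(a)Γ(b)/Γ(a+b)`. -/
noncomputable def realBeta (a b : ℝ) : ℝ := Real.Gamma a * Real.Gamma b / Real.Gamma (a + b)

/-- Density of the Beta(2μ, 2(1-μ)) distribution. -/
noncomputable def betaDensity (μ : ℝ) (u : ℝ) : ℝ :=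
  if 0 < u ∧ u < 1 then
    u ^ (2 * μ - 1) * (1 - u) ^ (1 - 2 * μ) / realBeta (2 * μ) (2 * (1 - μ))
  else 0

/-- The chi-squared distribution with `k` degrees of freedom, as a measure on ℝ. -/
noncomputable def chiSqMeasure (k : ℝ) : Measure ℝ :=
  volume.withDensity (fun v => ENNReal.ofReal (chiSqDensity k v))

/-- The Beta(2μ, 2(1-μ)) distribution, as a measure on ℝ. -/
noncomputable def betaMeasure (μ : ℝ) : Measure ℝ :=
  volume.withDensity (fun u => ENNReal.ofReal (betaDensity μ u))

/-- The polar-generalized normal distribution PGN(μ, k): the pushforward of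
(chi-squared k) ⊗ (Beta(2μ, 2(1-μ))) under `(v, u) ↦ √v · cos (π u)`. -/
noncomputable def PGN (μ k : ℝ) : Measure ℝ :=
  Measure.map (fun p : ℝ × ℝ => Real.sqrt p.1 * Real.cos (π * p.2))
    ((chiSqMeasure k).prod (betaMeasure μ))

/-
Condition on `U = u`. Then `X = √V * c` with `c = cos (π u)`, a rescaling of a chi variable; the
substitution `v = (x / c) ^ 2` shows that its law has a density, carried by the half-line on which
`x` has the sign of `c`. By Tonelli, averaging these densities over `U` gives the density of `X`.
As `cos (π u)` is positive on `(0, 1/2)` and negative on `(1/2, 1)`, only one half of the unit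
interval contributes to the average at a given `x`.
-/

open scoped ENNReal

theorem map_withDensity_restrict_image_of_leftInvOn {s : Set ℝ} {f f' g : ℝ → ℝ}
    (hs : MeasurableSet s) (hf : ∀ x ∈ s, HasDerivWithinAt f (f' x) s x) (hg : Measurable g)
    (hgf : LeftInvOn g f s) (ρ : ℝ → ℝ≥0∞) :
    ((volume.restrict (f '' s)).withDensity ρ).map g =
      (volume.restrict s).withDensity fun x => ENNReal.ofReal |f' x| * ρ (f x) := by
  ext t ht
  rw [Measure.map_apply hg ht, withDensity_apply _ (hg ht), withDensity_apply _ ht,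
    Measure.restrict_restrict (hg ht), Measure.restrict_restrict ht, ← hgf.image_inter']
  exact lintegral_image_eq_lintegral_abs_deriv_mul (ht.inter hs)
    (fun x hx => (hf x hx.2).mono inter_subset_right) (hgf.injOn.mono inter_subset_right) ρ

section Mixture

variable {α β γ : Type*} [MeasurableSpace α] [MeasurableSpace β] [MeasurableSpace γ]
  {m : Measure α} {ν : Measure β} {η : Measure γ}

theorem map_prod_eq_withDensity_lintegral [SFinite m] [SFinite ν] [SFinite η]
    {g : α × β → γ} (hg : Measurable g) {q : β → γ → ℝ≥0∞} (hq : Measurable (Function.uncurry q))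
    (h : ∀ᵐ u ∂ν, m.map (fun v => g (v, u)) = η.withDensity (q u)) :
    (m.prod ν).map g = η.withDensity fun x => ∫⁻ u, q u x ∂ν := by
  ext t ht
  calc (m.prod ν).map g t
      = ∫⁻ u, m ((fun v => (v, u)) ⁻¹' (g ⁻¹' t)) ∂ν := by
        rw [Measure.map_apply hg ht, Measure.prod_apply_symm (hg ht)]
    _ = ∫⁻ u, ∫⁻ x in t, q u x ∂η ∂ν := by
        refine lintegral_congr_ae ?_
        filter_upwards [h] with u hu
        rw [← withDensity_apply _ ht, ← hu, Measure.map_apply (by fun_prop) ht, preimage_preimage]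
    _ = ∫⁻ x in t, ∫⁻ u, q u x ∂ν ∂η := lintegral_lintegral_swap hq.aemeasurable
    _ = η.withDensity (fun x => ∫⁻ u, q u x ∂ν) t := (withDensity_apply _ ht).symm

theorem withDensity_lintegral_ofReal_eq_withDensity_ofReal_integral [SFinite ν]
    {q : β → γ → ℝ} (hq : Measurable (Function.uncurry q)) (hq0 : ∀ u x, 0 ≤ q u x)
    (hfin : ∫⁻ x, ∫⁻ u, ENNReal.ofReal (q u x) ∂ν ∂η ≠ ∞) :
    η.withDensity (fun x => ∫⁻ u, ENNReal.ofReal (q u x) ∂ν) =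
      η.withDensity fun x => ENNReal.ofReal (∫ u, q u x ∂ν) := by
  refine withDensity_congr_ae ?_
  filter_upwards [ae_lt_top hq.ennreal_ofReal.lintegral_prod_left' hfin] with x hx
  rw [integral_eq_lintegral_of_nonneg_ae (.of_forall fun u => hq0 u x)
    (hq.comp measurable_prodMk_right).aestronglyMeasurable]
  exact (ENNReal.ofReal_toReal hx.ne).symm

theorem map_prod_eq_withDensity_integral [IsFiniteMeasure m] [IsFiniteMeasure ν] [SFinite η]
    {g : α × β → γ} (hg : Measurable g) {q : β → γ → ℝ} (hq : Measurable (Function.uncurry q))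
    (hq0 : ∀ u x, 0 ≤ q u x)
    (h : ∀ᵐ u ∂ν, m.map (fun v => g (v, u)) = η.withDensity fun x => ENNReal.ofReal (q u x)) :
    (m.prod ν).map g = η.withDensity fun x => ENNReal.ofReal (∫ u, q u x ∂ν) := by
  have hmap := map_prod_eq_withDensity_lintegral hg
    (q := fun u x => ENNReal.ofReal (q u x)) hq.ennreal_ofReal h
  rw [hmap]
  refine withDensity_lintegral_ofReal_eq_withDensity_ofReal_integral hq hq0 ?_
  rw [← setLIntegral_univ, ← withDensity_apply _ .univ, ← hmap]
  exact measure_ne_top _ _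

end Mixture

theorem chiSqMeasure_eq_gammaMeasure (k : ℝ) :
    chiSqMeasure k = ProbabilityTheory.gammaMeasure (k / 2) (1 / 2) := by
  refine withDensity_congr_ae ?_
  filter_upwards [Measure.ae_ne volume (0 : ℝ)] with v hv
  rcases lt_or_gt_of_ne hv with hneg | hpos
  · simp [chiSqDensity, ProbabilityTheory.gammaPDF_of_neg hneg, hneg.not_gt]
  · rw [ProbabilityTheory.gammaPDF_of_nonneg hpos.le, chiSqDensity, if_pos hpos, one_div,
      Real.inv_rpow zero_le_two, show -(2⁻¹ * v) = -v / 2 by ring]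
    congr 1
    ring

theorem isProbabilityMeasure_chiSqMeasure {k : ℝ} (hk : 0 < k) :
    IsProbabilityMeasure (chiSqMeasure k) := by
  rw [chiSqMeasure_eq_gammaMeasure]
  exact ProbabilityTheory.isProbabilityMeasure_gammaMeasure (half_pos hk) one_half_pos

theorem chiSqMeasure_eq_withDensity_restrict_Ioi (k : ℝ) :
    chiSqMeasure k =
      (volume.restrict (Ioi 0)).withDensity fun v => ENNReal.ofReal (chiSqDensity k v) := by
  rw [chiSqMeasure, ← withDensity_indicator measurableSet_Ioi]
  congr 1 with v
  by_cases hv : 0 < v <;> simp [chiSqDensity, hv]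

/-- The density at `x` of `√V * c`, where `V` is chi-squared distributed with `k` degrees of
freedom and `c ≠ 0`. It vanishes for `c = 0`, since then `x / c = 0`. -/
noncomputable def scaledChiDensity (k c x : ℝ) : ℝ :=
  if 0 < x / c then
    (x ^ 2) ^ ((k - 1) / 2) / (Real.Gamma (k / 2) * (2 : ℝ) ^ (k / 2 - 1)) *
      ((c ^ 2) ^ (-(k / 2)) * Real.exp (-(x ^ 2 / (2 * c ^ 2))))
  else 0

theorem scaledChiDensity_nonneg {k : ℝ} (hk : 0 < k) (c x : ℝ) : 0 ≤ scaledChiDensity k c x := by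
  have := Real.Gamma_pos_of_pos (half_pos hk)
  unfold scaledChiDensity
  split_ifs <;> positivity

theorem measurable_uncurry_scaledChiDensity (k : ℝ) :
    Measurable (Function.uncurry (scaledChiDensity k)) :=
  Measurable.ite (measurableSet_lt measurable_const (by fun_prop)) (by fun_prop) (by fun_prop)

theorem abs_deriv_mul_chiSqDensity_div_sq (k : ℝ) {c x : ℝ} (hxc : 0 < x / c) :
    |2 * x / c ^ 2| * chiSqDensity k ((x / c) ^ 2) = scaledChiDensity k c x := by
  obtain ⟨hx, hc⟩ := div_ne_zero_iff.1 hxc.ne'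
  have hx2 : 0 < x ^ 2 := by positivity
  have hc2 : 0 < c ^ 2 := by positivity
  have hpow : |x| / c ^ 2 * ((x / c) ^ 2) ^ (k / 2 - 1) =
      (x ^ 2) ^ ((k - 1) / 2) * (c ^ 2) ^ (-(k / 2)) := by
    rw [← Real.sqrt_sq_eq_abs, Real.sqrt_eq_rpow, div_pow, Real.div_rpow hx2.le hc2.le,
      show (k - 1) / 2 = 1 / 2 + (k / 2 - 1) by ring, Real.rpow_add hx2,
      Real.rpow_neg hc2.le, Real.rpow_sub_one hc2.ne']
    field_simp
  have hexp : -(x / c) ^ 2 / 2 = -(x ^ 2 / (2 * c ^ 2)) := by field_simp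
  calc |2 * x / c ^ 2| * chiSqDensity k ((x / c) ^ 2)
      = 2 / ((2 : ℝ) ^ (k / 2) * Real.Gamma (k / 2)) *
          (|x| / c ^ 2 * ((x / c) ^ 2) ^ (k / 2 - 1)) * Real.exp (-(x / c) ^ 2 / 2) := by
        rw [chiSqDensity, if_pos (by positivity), abs_div, abs_mul, abs_two, abs_of_pos hc2]
        ring
    _ = scaledChiDensity k c x := by
        rw [hpow, hexp, scaledChiDensity, if_pos hxc, Real.rpow_sub_one two_ne_zero]
        field_simp

theorem leftInvOn_sqrt_mul_div_sq (c : ℝ) :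
    LeftInvOn (fun v => √v * c) (fun x => (x / c) ^ 2) {x | 0 < x / c} := by
  intro x (hx : 0 < x / c)
  simp only [Real.sqrt_sq hx.le]
  exact div_mul_cancel₀ x (div_ne_zero_iff.1 hx.ne').2

theorem image_div_sq_setOf_div_pos {c : ℝ} (hc : c ≠ 0) :
    (fun x => (x / c) ^ 2) '' {x | 0 < x / c} = Ioi 0 := by
  refine Subset.antisymm (image_subset_iff.2 fun x (hx : 0 < x / c) => pow_pos hx 2) fun v hv => ?_
  refine ⟨√v * c, ?_, ?_⟩
  · simpa only [mem_ofPred_eq, mul_div_cancel_right₀ _ hc] using Real.sqrt_pos.2 hv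
  · simp only [mul_div_cancel_right₀ _ hc, Real.sq_sqrt (le_of_lt hv)]

theorem map_sqrt_mul_chiSqMeasure (k : ℝ) {c : ℝ} (hc : c ≠ 0) :
    (chiSqMeasure k).map (fun v => √v * c) =
      volume.withDensity fun x => ENNReal.ofReal (scaledChiDensity k c x) := by
  have hs : MeasurableSet {x : ℝ | 0 < x / c} := measurableSet_lt measurable_const (by fun_prop)
  have hderiv (x : ℝ) (_ : x ∈ {x | 0 < x / c}) :
      HasDerivWithinAt (fun x => (x / c) ^ 2) (2 * x / c ^ 2) {x | 0 < x / c} x :=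
    (((hasDerivAt_id' x).div_const c).fun_pow 2).congr_deriv
      (by simp only [Nat.cast_ofNat]; ring) |>.hasDerivWithinAt
  rw [chiSqMeasure_eq_withDensity_restrict_Ioi, ← image_div_sq_setOf_div_pos hc,
    map_withDensity_restrict_image_of_leftInvOn hs hderiv (by fun_prop)
      (leftInvOn_sqrt_mul_div_sq c), ← withDensity_indicator hs]
  congr 1 with x
  by_cases hx : x ∈ {x | 0 < x / c}
  · rw [indicator_of_mem hx, ← ENNReal.ofReal_mul (abs_nonneg _),
      abs_deriv_mul_chiSqDensity_div_sq k hx]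
  · rw [indicator_of_notMem hx, scaledChiDensity, if_neg (mem_ofPred.not.1 hx),
      ENNReal.ofReal_zero]

theorem map_sqrt_mul_chiSqMeasure_prod {β : Type*} [MeasurableSpace β] {ν : Measure β}
    [IsFiniteMeasure ν] {k : ℝ} (hk : 0 < k) {c : β → ℝ} (hc : Measurable c)
    (hc0 : ∀ᵐ u ∂ν, c u ≠ 0) :
    ((chiSqMeasure k).prod ν).map (fun p => √p.1 * c p.2) =
      volume.withDensity fun x => ENNReal.ofReal (∫ u, scaledChiDensity k (c u) x ∂ν) := by
  have := isProbabilityMeasure_chiSqMeasure hk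
  refine map_prod_eq_withDensity_integral (by fun_prop)
    ((measurable_uncurry_scaledChiDensity k).comp (by fun_prop : Measurable (Prod.map c id)))
    (fun u x => scaledChiDensity_nonneg hk (c u) x) ?_
  filter_upwards [hc0] with u hu using map_sqrt_mul_chiSqMeasure k hu

theorem betaDensity_eq_betaPDFReal (μ : ℝ) :
    betaDensity μ = ProbabilityTheory.betaPDFReal (2 * μ) (2 * (1 - μ)) := by
  ext u
  simp only [betaDensity, ProbabilityTheory.betaPDFReal, realBeta, ProbabilityTheory.beta]
  rw [show 2 * (1 - μ) - 1 = 1 - 2 * μ by ring]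
  split_ifs
  · ring
  · rfl

theorem measurable_betaDensity (μ : ℝ) : Measurable (betaDensity μ) := by
  rw [betaDensity_eq_betaPDFReal]
  fun_prop

theorem betaDensity_of_notMem_Ioo {μ u : ℝ} (hu : u ∉ Ioo 0 1) : betaDensity μ u = 0 :=
  if_neg hu

theorem betaDensity_nonneg {μ : ℝ} (hμ : μ ∈ Ioo (0 : ℝ) 1) (u : ℝ) : 0 ≤ betaDensity μ u := by
  by_cases hu : u ∈ Ioo 0 1
  · rw [betaDensity_eq_betaPDFReal]
    exact (ProbabilityTheory.betaPDFReal_pos hu.1 hu.2 (by linarith [hμ.1])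
      (by linarith [hμ.2])).le
  · exact (betaDensity_of_notMem_Ioo hu).ge

theorem isProbabilityMeasure_betaMeasure {μ : ℝ} (hμ : μ ∈ Ioo (0 : ℝ) 1) :
    IsProbabilityMeasure (betaMeasure μ) := by
  rw [betaMeasure, betaDensity_eq_betaPDFReal]
  exact ProbabilityTheory.isProbabilityMeasureBeta (by linarith [hμ.1]) (by linarith [hμ.2])

theorem ae_betaMeasure_mem_Ioo (μ : ℝ) : ∀ᵐ u ∂betaMeasure μ, u ∈ Ioo 0 1 := by
  rw [betaMeasure, ae_withDensity_iff (measurable_betaDensity μ).ennreal_ofReal]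
  refine .of_forall fun u hu => ?_
  contrapose! hu
  rw [betaDensity_of_notMem_Ioo hu, ENNReal.ofReal_zero]

theorem integral_betaMeasure {E : Type*} [NormedAddCommGroup E] [NormedSpace ℝ E] {μ : ℝ}
    (hμ : μ ∈ Ioo (0 : ℝ) 1) (f : ℝ → E) :
    ∫ u, f u ∂betaMeasure μ = ∫ u in Ioo 0 1, betaDensity μ u • f u := by
  rw [betaMeasure, integral_withDensity_eq_integral_toReal_smul
      (measurable_betaDensity μ).ennreal_ofReal (.of_forall fun _ => ENNReal.ofReal_lt_top),
    setIntegral_eq_integral_of_forall_compl_eq_zero fun u hu => by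
      rw [betaDensity_of_notMem_Ioo hu, zero_smul]]
  simp only [ENNReal.toReal_ofReal (betaDensity_nonneg hμ _)]

theorem pi_mul_mem_Icc {u : ℝ} (hu : u ∈ Ioo 0 1) : π * u ∈ Icc 0 π :=
  ⟨mul_nonneg Real.pi_pos.le hu.1.le, mul_le_of_le_one_right Real.pi_pos.le hu.2.le⟩

theorem cos_pi_mul_pos_iff {u : ℝ} (hu : u ∈ Ioo 0 1) : 0 < Real.cos (π * u) ↔ u < 1 / 2 := by
  have hhalf : π / 2 ∈ Icc 0 π := ⟨by positivity, half_le_self Real.pi_pos.le⟩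
  rw [← Real.cos_pi_div_two, Real.strictAntiOn_cos.lt_iff_gt hhalf (pi_mul_mem_Icc hu),
    div_eq_mul_one_div π, mul_lt_mul_iff_right₀ Real.pi_pos]

theorem cos_pi_mul_neg_iff {u : ℝ} (hu : u ∈ Ioo 0 1) : Real.cos (π * u) < 0 ↔ 1 / 2 < u := by
  have hhalf : π / 2 ∈ Icc 0 π := ⟨by positivity, half_le_self Real.pi_pos.le⟩
  rw [← Real.cos_pi_div_two, Real.strictAntiOn_cos.lt_iff_gt (pi_mul_mem_Icc hu) hhalf,
    div_eq_mul_one_div π, mul_lt_mul_iff_right₀ Real.pi_pos]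

theorem ae_betaMeasure_cos_pi_mul_ne_zero (μ : ℝ) :
    ∀ᵐ u ∂betaMeasure μ, Real.cos (π * u) ≠ 0 := by
  have hhalf : ∀ᵐ u ∂betaMeasure μ, u ≠ 1 / 2 :=
    (withDensity_absolutelyContinuous _ _).ae_le (Measure.ae_ne volume _)
  filter_upwards [ae_betaMeasure_mem_Ioo μ, hhalf] with u hu hne
  rcases lt_or_gt_of_ne hne with hlt | hgt
  · exact ((cos_pi_mul_pos_iff hu).2 hlt).ne'
  · exact ((cos_pi_mul_neg_iff hu).2 hgt).ne

theorem PGN_eq_withDensity_integral {k μ : ℝ} (hk : 0 < k) (hμ : μ ∈ Ioo (0 : ℝ) 1) :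
    PGN μ k = volume.withDensity fun x =>
      ENNReal.ofReal (∫ u, scaledChiDensity k (Real.cos (π * u)) x ∂betaMeasure μ) := by
  have := isProbabilityMeasure_betaMeasure hμ
  exact map_sqrt_mul_chiSqMeasure_prod hk (by fun_prop) (ae_betaMeasure_cos_pi_mul_ne_zero μ)

theorem integral_scaledChiDensity_betaMeasure {μ : ℝ} (hμ : μ ∈ Ioo (0 : ℝ) 1) (k x : ℝ)
    {a b : ℝ} (hab : a ≤ b) (hsign : Ioo 0 1 ∩ {u | 0 < x / Real.cos (π * u)} = Ioo a b) :
    ∫ u, scaledChiDensity k (Real.cos (π * u)) x ∂betaMeasure μ =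
      (x ^ 2) ^ ((k - 1) / 2) / (Real.Gamma (k / 2) * (2 : ℝ) ^ (k / 2 - 1)) *
        ∫ u in a..b, (Real.cos (π * u) ^ 2) ^ (-(k / 2)) *
          Real.exp (-(x ^ 2 / (2 * Real.cos (π * u) ^ 2))) * betaDensity μ u := by
  have hs : MeasurableSet {u : ℝ | 0 < x / Real.cos (π * u)} :=
    measurableSet_lt measurable_const (by fun_prop)
  rw [integral_betaMeasure hμ, intervalIntegral.integral_of_le hab, integral_Ioc_eq_integral_Ioo,
    ← hsign, ← integral_const_mul, ← setIntegral_indicator hs]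
  congr 1 with u
  by_cases hu : u ∈ {u | 0 < x / Real.cos (π * u)}
  · rw [indicator_of_mem hu, scaledChiDensity, if_pos (mem_ofPred.1 hu), smul_eq_mul]
    ring
  · rw [indicator_of_notMem hu, scaledChiDensity, if_neg (mem_ofPred.not.1 hu), smul_zero]

theorem Ioo_inter_setOf_div_cos_pi_mul_pos_of_neg {x : ℝ} (hx : x < 0) :
    Ioo 0 1 ∩ {u | 0 < x / Real.cos (π * u)} = Ioo (1 / 2) 1 := by
  have hsub : Ioo (1 / 2 : ℝ) 1 ⊆ Ioo 0 1 := Ioo_subset_Ioo_left (by norm_num)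
  ext u
  constructor
  · rintro ⟨hu, hpos : 0 < x / Real.cos (π * u)⟩
    have hcos := ((div_pos_iff.1 hpos).resolve_left fun h => h.1.not_gt hx).2
    exact ⟨(cos_pi_mul_neg_iff hu).1 hcos, hu.2⟩
  · intro hu
    exact ⟨hsub hu, div_pos_of_neg_of_neg hx ((cos_pi_mul_neg_iff (hsub hu)).2 hu.1)⟩

theorem Ioo_inter_setOf_div_cos_pi_mul_pos_of_pos {x : ℝ} (hx : 0 < x) :
    Ioo 0 1 ∩ {u | 0 < x / Real.cos (π * u)} = Ioo 0 (1 / 2) := by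
  have hsub : Ioo (0 : ℝ) (1 / 2) ⊆ Ioo 0 1 := Ioo_subset_Ioo_right (by norm_num)
  ext u
  constructor
  · rintro ⟨hu, hpos : 0 < x / Real.cos (π * u)⟩
    exact ⟨hu.1, (cos_pi_mul_pos_iff hu).1 ((div_pos_iff_of_pos_left hx).1 hpos)⟩
  · intro hu
    exact ⟨hsub hu, div_pos hx ((cos_pi_mul_pos_iff (hsub hu)).2 hu.2)⟩

theorem stmt1 (k μ : ℝ) (hk : 0 < k) (hμ : μ ∈ Set.Ioo (0:ℝ) 1) :
    PGN μ k = volume.withDensity (fun x : ℝ => ENNReal.ofReal (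
      if x < 0 then
        (x ^ 2) ^ ((k - 1) / 2) / (Real.Gamma (k / 2) * (2 : ℝ) ^ (k / 2 - 1)) *
          ∫ u in (1/2 : ℝ)..1,
            (Real.cos (π * u) ^ 2) ^ (-(k / 2)) *
              Real.exp (-(x ^ 2 / (2 * Real.cos (π * u) ^ 2))) * betaDensity μ u
      else
        (x ^ 2) ^ ((k - 1) / 2) / (Real.Gamma (k / 2) * (2 : ℝ) ^ (k / 2 - 1)) *
          ∫ u in (0 : ℝ)..(1/2),
            (Real.cos (π * u) ^ 2) ^ (-(k / 2)) *
              Real.exp (-(x ^ 2 / (2 * Real.cos (π * u) ^ 2))) * betaDensity μ u)) := by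
  rw [PGN_eq_withDensity_integral hk hμ]
  refine withDensity_congr_ae ?_
  filter_upwards [Measure.ae_ne volume (0 : ℝ)] with x hx
  congr 1
  split_ifs with hneg
  · exact integral_scaledChiDensity_betaMeasure hμ k x (by norm_num)
      (Ioo_inter_setOf_div_cos_pi_mul_pos_of_neg hneg)
  · exact integral_scaledChiDensity_betaMeasure hμ k x (by norm_num)
      (Ioo_inter_setOf_div_cos_pi_mul_pos_of_pos (lt_of_le_of_ne (not_lt.1 hneg) hx.symm))
end

section
/- Let k > 0 and take μ = 1/2. Then the PGN(1/2, k) distribution has, for Lebesgue-almost every x ∈ ℝ, the density f_X(x) = ((x²)^{(k−1)/2} · e^{−x²/2} / (√π · Γ(k/2) · 2^{k/2})) · U(1/2, (k+1)/2, x²/2), where U(a,b,z) = (1/Γ(a)) ∫_0^∞ e^{−zt} t^{a−1} (1+t)^{b−a−1} dt is Tricomi's confluent hypergeometric function (given here by its integral representation, valid for z > 0). -/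
open MeasureTheory Real Set

/-- Tricomi's confluent hypergeometric function, via its integral representation
`U(a,b,z) = (1/Γ(a)) ∫_0^∞ e^(-z t) t^(a-1) (1+t)^(b-a-1) dt`. -/
noncomputable def tricomiU (a b z : ℝ) : ℝ :=
  (1 / Real.Gamma a) * ∫ t in Set.Ioi (0:ℝ), Real.exp (-z * t) * t ^ (a - 1) * (1 + t) ^ (b - a - 1)

/-!
For `μ = 1/2` the angle is uniform, so for a fixed radius `√v` the variable `√v · cos (π u)` follows
the arcsine law on `(-√v, √v)`, with density `1 / (π √(v - x²))`. Hence by Tonelli the density of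
the pushforward at `x` is the mixture of these densities over the chi-squared variable `v > x²`.
The substitution `v = x² (1 + t)` turns this mixture into the integral representation of Tricomi's
function at `x² / 2`; the factor `√π / π = 1 / √π` comes from `Γ(1/2) = √π`.
-/

/-- The density of the arcsine law on `(-√v, √v)`, parametrised by the square `v` of the radius so
that mixing over the radial variable of a polar decomposition is integration in `v`. No case
distinction is needed: outside the support `√` takes the value `0`, hence so does `⁻¹`. -/
noncomputable def arcsinePDF (v x : ℝ) : ENNReal := ENNReal.ofReal (π * √(v - x ^ 2))⁻¹

lemma measurable_uncurry_arcsinePDF : Measurable (Function.uncurry arcsinePDF) := by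
  unfold arcsinePDF Function.uncurry
  fun_prop

lemma sq_lt_of_arcsinePDF_ne_zero {v x : ℝ} (h : arcsinePDF v x ≠ 0) : x ^ 2 < v := by
  contrapose! h
  simp [arcsinePDF, sqrt_eq_zero_of_nonpos (sub_nonpos.2 h)]

lemma bijOn_mul_cos_pi_mul {r : ℝ} (hr : 0 < r) :
    BijOn (fun u => r * cos (π * u)) (Ioo 0 1) (Ioo (-r) r) := by
  have hscale {c : ℝ} (hc : 0 < c) (a b : ℝ) : BijOn (c * ·) (Ioo a b) (Ioo (c * a) (c * b)) :=
    image_mul_left_Ioo hc a b ▸ (mul_right_injective₀ hc.ne').injOn.bijOn_image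
  have hcos : BijOn cos (Ioo 0 π) (Ioo (-1) 1) := cosPartialHomeomorph.bijOn
  have hangle : BijOn (π * ·) (Ioo 0 1) (Ioo 0 π) := by simpa using hscale pi_pos 0 1
  have hradius : BijOn (r * ·) (Ioo (-1) 1) (Ioo (-r) r) := by simpa using hscale hr (-1) 1
  exact hradius.comp (hcos.comp hangle)

lemma hasDerivAt_mul_cos_pi_mul (r u : ℝ) :
    HasDerivAt (fun u => r * cos (π * u)) (-(r * sin (π * u) * π)) u := by
  convert! ((hasDerivAt_const_mul π).cos.const_mul r) using 1
  ring

lemma abs_deriv_mul_arcsinePDF_mul_cos {r u : ℝ} (hr : 0 < r) (hu : u ∈ Ioo (0 : ℝ) 1) :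
    ENNReal.ofReal |-(r * sin (π * u) * π)| * arcsinePDF (r ^ 2) (r * cos (π * u)) = 1 := by
  have hsin : 0 < sin (π * u) :=
    sin_pos_of_pos_of_lt_pi (mul_pos pi_pos hu.1) (mul_lt_of_lt_one_right pi_pos hu.2)
  have hsqrt : √(r ^ 2 - (r * cos (π * u)) ^ 2) = r * sin (π * u) := by
    rw [sqrt_eq_iff_mul_self_eq_of_pos (by positivity)]
    linear_combination r ^ 2 * sin_sq_add_cos_sq (π * u)
  rw [arcsinePDF, hsqrt, abs_neg, abs_of_pos (by positivity), mul_comm π (r * _),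
    ← ENNReal.ofReal_mul (by positivity), mul_inv_cancel₀ (by positivity), ENNReal.ofReal_one]

theorem map_mul_cos_uniform {r : ℝ} (hr : 0 < r) :
    (volume.restrict (Ioo (0 : ℝ) 1)).map (fun u => r * cos (π * u)) =
      volume.withDensity (arcsinePDF (r ^ 2)) := by
  set φ : ℝ → ℝ := fun u => r * cos (π * u)
  have hφ : Measurable φ := by fun_prop
  have hbij : BijOn φ (Ioo 0 1) (Ioo (-r) r) := bijOn_mul_cos_pi_mul hr
  ext s hs
  have hT : MeasurableSet (φ ⁻¹' s ∩ Ioo 0 1) := (hφ hs).inter measurableSet_Ioo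
  have hsupp : (arcsinePDF (r ^ 2)).support ⊆ Ioo (-r) r := fun x hx =>
    abs_lt.1 (abs_lt_of_sq_lt_sq (sq_lt_of_arcsinePDF_ne_zero hx) hr.le)
  rw [Measure.map_apply hφ hs, Measure.restrict_apply (hφ hs), withDensity_apply _ hs]
  symm
  calc ∫⁻ x in s, arcsinePDF (r ^ 2) x
      = ∫⁻ x in φ '' (φ ⁻¹' s ∩ Ioo 0 1), arcsinePDF (r ^ 2) x := by
        rw [image_preimage_inter, hbij.image_eq, inter_comm,
          ← Measure.restrict_restrict measurableSet_Ioo, setLIntegral_eq_of_support_subset hsupp]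
    _ = ∫⁻ u in φ ⁻¹' s ∩ Ioo 0 1,
          ENNReal.ofReal |-(r * sin (π * u) * π)| * arcsinePDF (r ^ 2) (φ u) :=
        lintegral_image_eq_lintegral_abs_deriv_mul hT
          (fun u _ => (hasDerivAt_mul_cos_pi_mul r u).hasDerivWithinAt)
          (hbij.injOn.mono inter_subset_right) _
    _ = ∫⁻ _ in φ ⁻¹' s ∩ Ioo 0 1, 1 :=
        setLIntegral_congr_fun hT fun u hu => abs_deriv_mul_arcsinePDF_mul_cos hr hu.2
    _ = volume (φ ⁻¹' s ∩ Ioo 0 1) := setLIntegral_one _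

theorem map_sqrt_mul_cos_prod_uniform {μ : Measure ℝ} [SFinite μ] (hμ : ∀ᵐ v ∂μ, 0 < v) :
    (μ.prod (volume.restrict (Ioo (0 : ℝ) 1))).map (fun p => √p.1 * cos (π * p.2)) =
      volume.withDensity (fun x => ∫⁻ v, arcsinePDF v x ∂μ) := by
  have hmap : Measurable fun p : ℝ × ℝ => √p.1 * cos (π * p.2) := by fun_prop
  ext s hs
  rw [Measure.map_apply hmap hs, Measure.prod_apply (hmap hs), withDensity_apply _ hs,
    ← lintegral_lintegral_swap measurable_uncurry_arcsinePDF.aemeasurable]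
  refine lintegral_congr_ae (hμ.mono fun v hv => ?_)
  have hsection := congrArg (· s) (map_mul_cos_uniform (sqrt_pos.2 hv))
  rwa [sq_sqrt hv.le, withDensity_apply _ hs, Measure.map_apply (by fun_prop) hs] at hsection

lemma integrableOn_tricomiU_integrand {a z : ℝ} (ha : 0 < a) (hz : 0 < z) (b : ℝ) :
    IntegrableOn (fun t => exp (-z * t) * t ^ (a - 1) * (1 + t) ^ (b - a - 1)) (Ioi 0) := by
  set c := b - a - 1
  set M := (|c| / (z / 2)) ^ |c| * exp (z / 2)
  have hgamma : IntegrableOn (fun t => t ^ (a - 1) * exp (-(z / 2) * t)) (Ioi 0) := by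
    simpa using integrableOn_rpow_mul_exp_neg_mul_rpow (p := 1) (by linarith) one_pos (half_pos hz)
  refine (hgamma.const_mul M).mono' (by fun_prop) ?_
  filter_upwards [ae_restrict_mem measurableSet_Ioi] with t (ht : 0 < t)
  -- Half of the exponential decay absorbs the power of `1 + t`, whatever the sign of `c`.
  have hpow : (1 + t) ^ c ≤ M * exp (z / 2 * t) := by
    calc (1 + t) ^ c ≤ |1 + t| ^ |c| := by
          rw [abs_of_pos (by positivity)]
          exact rpow_le_rpow_of_exponent_le (by linarith) (le_abs_self c)
      _ ≤ (|c| / |z / 2|) ^ |c| * exp (|z / 2| * |1 + t|) :=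
          ProbabilityTheory.rpow_abs_le_mul_exp_abs _ (abs_nonneg c) (half_pos hz).ne'
      _ = M * exp (z / 2 * t) := by
          rw [abs_of_pos (half_pos hz), abs_of_pos (by positivity : 0 < 1 + t), mul_one_add,
            exp_add, mul_assoc]
  calc ‖exp (-z * t) * t ^ (a - 1) * (1 + t) ^ c‖
      = exp (-z * t) * t ^ (a - 1) * (1 + t) ^ c := norm_of_nonneg (by positivity)
    _ ≤ exp (-z * t) * t ^ (a - 1) * (M * exp (z / 2 * t)) := by gcongr
    _ = M * (t ^ (a - 1) * (exp (-z * t) * exp (z / 2 * t))) := by ring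
    _ = M * (t ^ (a - 1) * exp (-(z / 2) * t)) := by
        rw [← exp_add]
        ring_nf

lemma ofReal_Gamma_mul_tricomiU {a z : ℝ} (ha : 0 < a) (hz : 0 < z) (b : ℝ) :
    ENNReal.ofReal (Gamma a * tricomiU a b z) =
      ∫⁻ t in Ioi 0, ENNReal.ofReal (exp (-z * t) * t ^ (a - 1) * (1 + t) ^ (b - a - 1)) := by
  rw [tricomiU, ← mul_assoc, mul_one_div_cancel (Gamma_pos_of_pos ha).ne', one_mul]
  refine ofReal_integral_eq_lintegral_ofReal (integrableOn_tricomiU_integrand ha hz b) ?_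
  filter_upwards [ae_restrict_mem measurableSet_Ioi] with t (ht : 0 < t)
  simp only [Pi.zero_apply]
  positivity

lemma lintegral_Ioi_eq_lintegral_comp_mul_one_add {y : ℝ} (hy : 0 < y) (f : ℝ → ENNReal) :
    ∫⁻ v in Ioi y, f v = ∫⁻ t in Ioi 0, ENNReal.ofReal y * f (y * (1 + t)) := by
  have himage : (fun t => y * (1 + t)) '' Ioi 0 = Ioi y := by
    rw [← image_image (y * ·) (1 + ·), image_const_add_Ioi, image_mul_left_Ioi hy, add_zero,
      mul_one]
  have hderiv (t : ℝ) : HasDerivAt (fun t => y * (1 + t)) y t := by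
    simpa using ((hasDerivAt_id t).const_add 1).const_mul y
  have hinj : Function.Injective fun t => y * (1 + t) :=
    (mul_right_injective₀ hy.ne').comp (add_right_injective 1)
  rw [← himage, lintegral_image_eq_lintegral_abs_deriv_mul measurableSet_Ioi
    (fun t _ => (hderiv t).hasDerivWithinAt) hinj.injOn, abs_of_pos hy]

theorem lintegral_Ioi_rpow_mul_exp_mul_sub_rpow {a r y : ℝ} (ha : 0 < a) (hr : 0 < r) (hy : 0 < y)
    (b : ℝ) :
    ∫⁻ v in Ioi y, ENNReal.ofReal (v ^ (b - a - 1) * exp (-(r * v)) * (v - y) ^ (a - 1)) =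
      ENNReal.ofReal (Gamma a * (y ^ (b - 1) * exp (-(r * y)) * tricomiU a b (r * y))) := by
  have hscale (t : ℝ) (ht : 0 < t) :
      y * ((y * (1 + t)) ^ (b - a - 1) * exp (-(r * (y * (1 + t)))) *
          (y * (1 + t) - y) ^ (a - 1)) =
        y ^ (b - 1) * exp (-(r * y)) *
          (exp (-(r * y) * t) * t ^ (a - 1) * (1 + t) ^ (b - a - 1)) := by
    have hpow : y * y ^ (b - a - 1) * y ^ (a - 1) = y ^ (b - 1) := by
      rw [mul_assoc, ← rpow_add hy, mul_comm, ← rpow_add_one hy.ne']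
      ring_nf
    have hexp : exp (-(r * (y * (1 + t)))) = exp (-(r * y)) * exp (-(r * y) * t) := by
      rw [← exp_add]
      ring_nf
    rw [show y * (1 + t) - y = y * t by ring, mul_rpow hy.le (by positivity), mul_rpow hy.le ht.le,
      hexp, ← hpow]
    ring
  rw [lintegral_Ioi_eq_lintegral_comp_mul_one_add hy, mul_left_comm,
    ENNReal.ofReal_mul (by positivity), ofReal_Gamma_mul_tricomiU ha (mul_pos hr hy),
    ← lintegral_const_mul' _ _ ENNReal.ofReal_ne_top]
  refine setLIntegral_congr_fun measurableSet_Ioi fun t (ht : 0 < t) => ?_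
  rw [← ENNReal.ofReal_mul hy.le, hscale t ht, ENNReal.ofReal_mul (by positivity)]

lemma betaMeasure_half : betaMeasure (1 / 2) = volume.restrict (Ioo (0 : ℝ) 1) := by
  rw [betaMeasure, ← withDensity_indicator_one measurableSet_Ioo]
  congr 1
  ext u
  by_cases hu : 0 < u ∧ u < 1
  · rw [betaDensity, if_pos hu, indicator_of_mem (mem_Ioo.2 hu)]
    norm_num [realBeta]
  · rw [betaDensity, if_neg hu, indicator_of_notMem (mt mem_Ioo.1 hu), ENNReal.ofReal_zero]

lemma measurable_chiSqDensity (k : ℝ) : Measurable (chiSqDensity k) :=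
  Measurable.ite measurableSet_Ioi (by fun_prop) measurable_const

instance sFinite_chiSqMeasure (k : ℝ) : SFinite (chiSqMeasure k) := by
  unfold chiSqMeasure
  infer_instance

lemma ae_pos_chiSqMeasure (k : ℝ) : ∀ᵐ v ∂chiSqMeasure k, 0 < v := by
  refine (ae_withDensity_iff (measurable_chiSqDensity k).ennreal_ofReal).2 ?_
  refine .of_forall fun v hv => ?_
  by_contra hneg
  simp [chiSqDensity, hneg] at hv

lemma chiSqDensity_mul_arcsinePDF {k v x : ℝ} (hk : 0 < k) (hv : x ^ 2 < v) :
    ENNReal.ofReal (chiSqDensity k v) * arcsinePDF v x =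
      ENNReal.ofReal (2 ^ (k / 2) * Gamma (k / 2) * π)⁻¹ *
        ENNReal.ofReal (v ^ (k / 2 - 1) * exp (-(1 / 2 * v)) * (v - x ^ 2) ^ (1 / 2 - 1 : ℝ)) := by
  have hv0 : 0 < v := (sq_nonneg x).trans_lt hv
  have hsqrt : (v - x ^ 2) ^ (1 / 2 - 1 : ℝ) = (√(v - x ^ 2))⁻¹ := by
    rw [sqrt_eq_rpow, ← rpow_neg (sub_nonneg.2 hv.le)]
    norm_num
  rw [arcsinePDF, ← ENNReal.ofReal_mul' (by positivity), ← ENNReal.ofReal_mul (by positivity),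
    chiSqDensity, if_pos hv0, hsqrt, show -(1 / 2 * v) = -v / 2 by ring]
  congr 1
  simp only [div_eq_mul_inv, mul_inv]
  ring

theorem lintegral_arcsinePDF_chiSqMeasure {k x : ℝ} (hk : 0 < k) (hx : x ≠ 0) :
    ∫⁻ v, arcsinePDF v x ∂chiSqMeasure k = ENNReal.ofReal (
      (x ^ 2) ^ ((k - 1) / 2) * exp (-(x ^ 2) / 2) / (√π * Gamma (k / 2) * 2 ^ (k / 2)) *
        tricomiU (1 / 2) ((k + 1) / 2) (x ^ 2 / 2)) := by
  have hsupp : (fun v => ENNReal.ofReal (chiSqDensity k v) * arcsinePDF v x).support ⊆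
      Ioi (x ^ 2) := fun v hv => sq_lt_of_arcsinePDF_ne_zero (right_ne_zero_of_mul hv)
  have htricomi := lintegral_Ioi_rpow_mul_exp_mul_sub_rpow one_half_pos one_half_pos
    (by positivity : 0 < x ^ 2) ((k + 1) / 2)
  rw [show (k + 1) / 2 - 1 / 2 - 1 = k / 2 - 1 by ring, show (k + 1) / 2 - 1 = (k - 1) / 2 by ring,
    show 1 / 2 * x ^ 2 = x ^ 2 / 2 by ring, Gamma_one_half_eq] at htricomi
  calc ∫⁻ v, arcsinePDF v x ∂chiSqMeasure k
      = ∫⁻ v, ENNReal.ofReal (chiSqDensity k v) * arcsinePDF v x :=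
        lintegral_withDensity_eq_lintegral_mul _ (measurable_chiSqDensity k).ennreal_ofReal
          (measurable_uncurry_arcsinePDF.of_uncurry_right)
    _ = ∫⁻ v in Ioi (x ^ 2), ENNReal.ofReal (chiSqDensity k v) * arcsinePDF v x :=
        (setLIntegral_eq_of_support_subset hsupp).symm
    _ = ENNReal.ofReal ((2 ^ (k / 2) * Gamma (k / 2) * π)⁻¹ * (√π *
          ((x ^ 2) ^ ((k - 1) / 2) * exp (-(x ^ 2 / 2)) *
            tricomiU (1 / 2) ((k + 1) / 2) (x ^ 2 / 2)))) := by
        rw [setLIntegral_congr_fun measurableSet_Ioi fun v hv => chiSqDensity_mul_arcsinePDF hk hv,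
          lintegral_const_mul' _ _ ENNReal.ofReal_ne_top, htricomi,
          ← ENNReal.ofReal_mul (by positivity)]
    _ = _ := by
        congr 1
        rw [neg_div]
        field_simp
        rw [sq_sqrt pi_pos.le]

theorem stmt3 (k : ℝ) (hk : 0 < k) :
    PGN (1/2) k = volume.withDensity (fun x : ℝ => ENNReal.ofReal (
      (x ^ 2) ^ ((k - 1) / 2) * Real.exp (-(x ^ 2) / 2) /
          (Real.sqrt π * Real.Gamma (k / 2) * (2 : ℝ) ^ (k / 2)) *
        tricomiU (1/2) ((k + 1) / 2) (x ^ 2 / 2))) := by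
  rw [PGN, betaMeasure_half, map_sqrt_mul_cos_prod_uniform (ae_pos_chiSqMeasure k)]
  refine withDensity_congr_ae ?_
  filter_upwards [compl_mem_ae_iff.2 (measure_singleton (0 : ℝ))] with x hx
  exact lintegral_arcsinePDF_chiSqMeasure hk hx
end
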